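/- Fix an integer K ≥ 3. For a parameter vector θ = (c₂,…,c_K, δ₁,…,δ_K, γ₁,…,γ_K) with strictly increasing thresholds c₂ < ⋯ < c_K and γ_l > 0 for all l, define the one-step transition probabilities p_{kl}(θ) = Φ((c_{k+1} − δ_l)/γ_l) − Φ((c_k − δ_l)/γ_l) for k, l ∈ {1,…,K}, with the conventions c₁ = −∞, c_{K+1} = +∞, Φ(−∞) = 0, Φ(+∞) = 1. Let Θ* be the set of such parameter vectors satisfying the normalization c₂ = 0 and γ₁ = 1, let θ₀ ∈ Θ*, and let w₁,…,w_K > 0 be strictly positive weights. Define the limiting composite log-likelihood L(θ) = Σ_{l=1}^{K} w_l · Σ_{k=1}^{K} p_{kl}(θ₀) · log p_{kl}(θ). Then θ₀ is the unique maximizer of L over Θ*: L(θ) ≤ L(θ₀) for all θ ∈ Θ*, with equality only if θ = θ₀. -/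

import Mathlib

/-!
The loss `L(θ₀) - L(θ)` is a positively weighted sum, over the columns `l`, of Kullback–Leibler
divergences, so it is nonnegative and vanishes exactly when all transition probabilities agree.
Partial sums over `k` and injectivity of `Φ` turn this into equality of all the standardized
thresholds `(c_k - δ_l) / γ_l`. Since `K ≥ 3`, each column contains two distinct thresholds, and two
points determine an affine map; hence the standardized thresholds determine `θ` up to a common
change of location and scale, which the normalization rules out.
-/

open MeasureTheory ProbabilityTheory

/-- The cumulative distribution function `Φ` of the standard normal distribution. -/
noncomputable def stdNormalCDF (x : ℝ) : ℝ :=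
  ((gaussianReal 0 1) (Set.Iic x)).toReal

/-- `Φ((c_k − δ_l)/γ_l)` with the conventions `c₁ = −∞` (value `0`) and
`c_{K+1} = +∞` (value `1`). -/
noncomputable def cl1G (K : ℕ) (c δ γ : ℕ → ℝ) (k l : ℕ) : ℝ :=
  if k ≤ 1 then 0 else if K + 1 ≤ k then 1 else stdNormalCDF ((c k - δ l) / γ l)

/-- The one-step transition probability
`p_{kl}(θ) = Φ((c_{k+1} − δ_l)/γ_l) − Φ((c_k − δ_l)/γ_l)`. -/
noncomputable def cl1p (K : ℕ) (c δ γ : ℕ → ℝ) (k l : ℕ) : ℝ :=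
  cl1G K c δ γ (k + 1) l - cl1G K c δ γ k l

/-- The normalized parameter set `Θ*`: increasing thresholds, positive volatilities,
`c₂ = 0` and `γ₁ = 1`. -/
def cl1Valid (K : ℕ) (c δ γ : ℕ → ℝ) : Prop :=
  (∀ l, 1 ≤ l → l ≤ K → 0 < γ l) ∧
    (∀ k, 2 ≤ k → k < K → c k < c (k + 1)) ∧ c 2 = 0 ∧ γ 1 = 1

/-- The limiting composite log-likelihood
`L(θ) = Σ_l w_l Σ_k p_{kl}(θ₀) log p_{kl}(θ)`. -/
noncomputable def cl1L (K : ℕ) (w : ℕ → ℝ) (c₀ δ₀ γ₀ c δ γ : ℕ → ℝ) : ℝ :=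
  ∑ l ∈ Finset.Icc 1 K, w l *
    ∑ k ∈ Finset.Icc 1 K, cl1p K c₀ δ₀ γ₀ k l * Real.log (cl1p K c δ γ k l)

section Gibbs

variable {ι κ : Type*} {s : Finset κ} {p q : κ → ℝ}

/-- The expected log-likelihood of `q` under `p`, i.e. the negative of their cross-entropy; `p` and
`q` are arbitrary real weights on `s`. -/
noncomputable def expectedLogLik (s : Finset κ) (p q : κ → ℝ) : ℝ :=
  ∑ k ∈ s, p k * Real.log (q k)

lemma mul_klFun_div (x : ℝ) {y : ℝ} (hy : y ≠ 0) :
    y * InformationTheory.klFun (x / y) = x * Real.log x - x * Real.log y + (y - x) := by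
  rcases eq_or_ne x 0 with rfl | hx
  · simp [InformationTheory.klFun_zero]
  · rw [InformationTheory.klFun_apply, Real.log_div hx hy]
    field_simp
    ring

lemma mul_klFun_div_nonneg {x y : ℝ} (hx : 0 ≤ x) (hy : 0 < y) :
    0 ≤ y * InformationTheory.klFun (x / y) :=
  mul_nonneg hy.le (InformationTheory.klFun_nonneg (div_nonneg hx hy.le))

lemma expectedLogLik_self_sub (hq : ∀ k ∈ s, q k ≠ 0) (hpq : ∑ k ∈ s, p k = ∑ k ∈ s, q k) :
    expectedLogLik s p p - expectedLogLik s p q =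
      ∑ k ∈ s, q k * InformationTheory.klFun (p k / q k) := by
  rw [Finset.sum_congr rfl fun k hk ↦ mul_klFun_div (p k) (hq k hk), Finset.sum_add_distrib,
    Finset.sum_sub_distrib, Finset.sum_sub_distrib, hpq, sub_self, add_zero]
  rfl

lemma expectedLogLik_le_self (hp : ∀ k ∈ s, 0 ≤ p k) (hq : ∀ k ∈ s, 0 < q k)
    (hpq : ∑ k ∈ s, p k = ∑ k ∈ s, q k) :
    expectedLogLik s p q ≤ expectedLogLik s p p := by
  rw [← sub_nonneg, expectedLogLik_self_sub (fun k hk ↦ (hq k hk).ne') hpq]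
  exact Finset.sum_nonneg fun k hk ↦ mul_klFun_div_nonneg (hp k hk) (hq k hk)

lemma expectedLogLik_eq_self_iff (hp : ∀ k ∈ s, 0 ≤ p k) (hq : ∀ k ∈ s, 0 < q k)
    (hpq : ∑ k ∈ s, p k = ∑ k ∈ s, q k) :
    expectedLogLik s p q = expectedLogLik s p p ↔ ∀ k ∈ s, q k = p k := by
  rw [eq_comm, ← sub_eq_zero, expectedLogLik_self_sub (fun k hk ↦ (hq k hk).ne') hpq,
    Finset.sum_eq_zero_iff_of_nonneg fun k hk ↦ mul_klFun_div_nonneg (hp k hk) (hq k hk)]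
  refine forall₂_congr fun k hk ↦ ?_
  rw [mul_eq_zero_iff_left (hq k hk).ne',
    InformationTheory.klFun_eq_zero_iff (div_nonneg (hp k hk) (hq k hk).le),
    div_eq_one_iff_eq (hq k hk).ne', eq_comm]

lemma weighted_expectedLogLik_le_and_eq_iff {t : Finset ι} {w : ι → ℝ} {p q : ι → κ → ℝ}
    (hw : ∀ l ∈ t, 0 < w l) (hp : ∀ l ∈ t, ∀ k ∈ s, 0 ≤ p l k) (hq : ∀ l ∈ t, ∀ k ∈ s, 0 < q l k)
    (hpq : ∀ l ∈ t, ∑ k ∈ s, p l k = ∑ k ∈ s, q l k) :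
    ∑ l ∈ t, w l * expectedLogLik s (p l) (q l) ≤ ∑ l ∈ t, w l * expectedLogLik s (p l) (p l) ∧
      (∑ l ∈ t, w l * expectedLogLik s (p l) (q l) = ∑ l ∈ t, w l * expectedLogLik s (p l) (p l) ↔
        ∀ l ∈ t, ∀ k ∈ s, q l k = p l k) := by
  have hcol : ∀ l ∈ t,
      w l * expectedLogLik s (p l) (q l) ≤ w l * expectedLogLik s (p l) (p l) := fun l hl ↦
    mul_le_mul_of_nonneg_left (expectedLogLik_le_self (hp l hl) (hq l hl) (hpq l hl)) (hw l hl).le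
  refine ⟨Finset.sum_le_sum hcol, ?_⟩
  rw [Finset.sum_eq_sum_iff_of_le hcol]
  refine forall₂_congr fun l hl ↦ ?_
  rw [mul_right_inj' (hw l hl).ne', expectedLogLik_eq_self_iff (hp l hl) (hq l hl) (hpq l hl)]

end Gibbs

section OrderedResponse

variable {K : ℕ} {u v : ℕ → ℝ} {k : ℕ}

/-- The cumulative probability below category `k` in an ordered response model with categories
`1, …, K`, where `u k` is the probability of a category less than `k` for `2 ≤ k ≤ K`; the values
at `k ≤ 1` and `k > K` are `0` and `1`, whatever `u` is there. -/
noncomputable def cumulProb (K : ℕ) (u : ℕ → ℝ) (k : ℕ) : ℝ :=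
  if k ≤ 1 then 0 else if K + 1 ≤ k then 1 else u k

/-- The probability of category `k` in the ordered response model with cumulative
probabilities `u`. -/
noncomputable def categoryProb (K : ℕ) (u : ℕ → ℝ) (k : ℕ) : ℝ :=
  cumulProb K u (k + 1) - cumulProb K u k

lemma cumulProb_of_mem (hk : k ∈ Finset.Icc 2 K) : cumulProb K u k = u k := by
  rw [Finset.mem_Icc] at hk
  rw [cumulProb, if_neg (by lia), if_neg (by lia)]

lemma cumulProb_congr (h : ∀ k ∈ Finset.Icc 2 K, u k = v k) (k : ℕ) :
    cumulProb K u k = cumulProb K v k := by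
  unfold cumulProb
  split_ifs with hk₁ hkK
  · rfl
  · rfl
  · exact h k (Finset.mem_Icc.2 (by lia))

lemma sum_Ico_categoryProb (hk : 1 ≤ k) :
    ∑ j ∈ Finset.Ico 1 k, categoryProb K u j = cumulProb K u k := by
  rw [← sub_zero (cumulProb K u k)]
  exact Finset.sum_Ico_sub (cumulProb K u) hk

lemma sum_categoryProb (hK : 1 ≤ K) (u : ℕ → ℝ) :
    ∑ k ∈ Finset.Icc 1 K, categoryProb K u k = 1 := by
  rw [← Finset.Ico_add_one_right_eq_Icc, sum_Ico_categoryProb (by lia), cumulProb,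
    if_neg (by lia), if_pos le_rfl]

lemma categoryProb_pos (hu : StrictMonoOn u (Set.Icc 2 K))
    (hu' : ∀ k ∈ Set.Icc 2 K, u k ∈ Set.Ioo 0 1) (hk : k ∈ Finset.Icc 1 K) :
    0 < categoryProb K u k := by
  obtain ⟨hk₁, hkK⟩ := Finset.mem_Icc.1 hk
  rw [categoryProb, sub_pos, cumulProb, cumulProb, if_neg (by lia : ¬K + 1 ≤ k),
    if_neg (by lia : ¬k + 1 ≤ 1)]
  split_ifs with h_first h_last h_last
  · exact one_pos
  · exact (hu' (k + 1) ⟨by lia, by lia⟩).1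
  · exact (hu' k ⟨by lia, hkK⟩).2
  · exact hu ⟨by lia, hkK⟩ ⟨by lia, by lia⟩ k.lt_succ_self

lemma categoryProb_eq_iff :
    (∀ k ∈ Finset.Icc 1 K, categoryProb K u k = categoryProb K v k) ↔
      ∀ k ∈ Finset.Icc 2 K, u k = v k := by
  refine ⟨fun h k hk ↦ ?_, fun h k _ ↦ ?_⟩
  · have hk' := Finset.mem_Icc.1 hk
    rw [← cumulProb_of_mem (u := u) hk, ← cumulProb_of_mem (u := v) hk,
      ← sum_Ico_categoryProb (by lia), ← sum_Ico_categoryProb (by lia)]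
    exact Finset.sum_congr rfl fun j hj ↦
      h j (Finset.mem_Icc.2 (by have := Finset.mem_Ico.1 hj; lia))
  · simp only [categoryProb, cumulProb_congr h]

end OrderedResponse

section Identification

variable {K : ℕ} {c δ γ c₀ δ₀ γ₀ : ℕ → ℝ}

/-- The `k`-th threshold, standardized by the location and the scale of column `l`. -/
noncomputable def standardizedThreshold (c δ γ : ℕ → ℝ) (l k : ℕ) : ℝ :=
  (c k - δ l) / γ l

/-- Thresholds and scales that are admissible before normalization: `c₂ < ⋯ < c_K` and `γ_l > 0`. -/
structure IsAdmissible (K : ℕ) (c γ : ℕ → ℝ) : Prop where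
  strictMonoOn : StrictMonoOn c (Set.Icc 2 K)
  scale_pos : ∀ l ∈ Finset.Icc 1 K, 0 < γ l

/-- The parameter `(c, δ, γ)` arises from `(c₀, δ₀, γ₀)` by the change of location and scale
`x ↦ a x + b`. Only the entries `c_2, …, c_K`, `δ_1, …, δ_K` and `γ_1, …, γ_K` are compared. -/
structure IsAffineChange (K : ℕ) (a b : ℝ) (c δ γ c₀ δ₀ γ₀ : ℕ → ℝ) : Prop where
  threshold_eq : ∀ k ∈ Finset.Icc 2 K, c k = a * c₀ k + b
  location_eq : ∀ l ∈ Finset.Icc 1 K, δ l = a * δ₀ l + b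
  scale_eq : ∀ l ∈ Finset.Icc 1 K, γ l = a * γ₀ l

lemma location_scale_eq_of_standardized_eq {𝕜 : Type*} [Field 𝕜] {a b x y d g d₀ g₀ : 𝕜}
    (hxy : x ≠ y) (hg : g ≠ 0) (hg₀ : g₀ ≠ 0) (hx : (a * x + b - d) / g = (x - d₀) / g₀)
    (hy : (a * y + b - d) / g = (y - d₀) / g₀) : d = a * d₀ + b ∧ g = a * g₀ := by
  rw [div_eq_div_iff hg hg₀] at hx hy
  have hscale : g = a * g₀ :=
    mul_left_cancel₀ (sub_ne_zero.2 hxy) (by linear_combination hy - hx)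
  refine ⟨mul_right_cancel₀ hg₀ ?_, hscale⟩
  linear_combination -hx - (x - d₀) * hscale

lemma IsAffineChange.standardizedThreshold_eq {a b : ℝ}
    (h : IsAffineChange K a b c δ γ c₀ δ₀ γ₀) (ha : a ≠ 0) {l k : ℕ} (hl : l ∈ Finset.Icc 1 K)
    (hk : k ∈ Finset.Icc 2 K) :
    standardizedThreshold c δ γ l k = standardizedThreshold c₀ δ₀ γ₀ l k := by
  rw [standardizedThreshold, standardizedThreshold, h.threshold_eq k hk, h.location_eq l hl,
    h.scale_eq l hl, add_sub_add_right_eq_sub, ← mul_sub, mul_div_mul_left _ _ ha]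

lemma exists_isAffineChange_of_standardizedThreshold_eq (hK : 3 ≤ K)
    (hγ : ∀ l ∈ Finset.Icc 1 K, γ l ≠ 0) (hγ₀ : ∀ l ∈ Finset.Icc 1 K, γ₀ l ≠ 0)
    (hc₀ : c₀ 2 ≠ c₀ 3)
    (h : ∀ l ∈ Finset.Icc 1 K, ∀ k ∈ Finset.Icc 2 K,
      standardizedThreshold c δ γ l k = standardizedThreshold c₀ δ₀ γ₀ l k) :
    ∃ a b, IsAffineChange K a b c δ γ c₀ δ₀ γ₀ := by
  have h₁ : 1 ∈ Finset.Icc 1 K := Finset.mem_Icc.2 (by lia)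
  have h₂ : 2 ∈ Finset.Icc 2 K := Finset.mem_Icc.2 (by lia)
  have h₃ : 3 ∈ Finset.Icc 2 K := Finset.mem_Icc.2 (by lia)
  -- The first column fixes the change of variables.
  set a := γ 1 / γ₀ 1
  set b := δ 1 - a * δ₀ 1 with hb
  have hc : ∀ k ∈ Finset.Icc 2 K, c k = a * c₀ k + b := fun k hk ↦ by
    have hz : c k - δ 1 = (c₀ k - δ₀ 1) / γ₀ 1 * γ 1 := (div_eq_iff (hγ 1 h₁)).1 (h 1 h₁ k hk)
    linear_combination hz - hb
  have hcol : ∀ l ∈ Finset.Icc 1 K, δ l = a * δ₀ l + b ∧ γ l = a * γ₀ l := fun l hl ↦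
    location_scale_eq_of_standardized_eq hc₀ (hγ l hl) (hγ₀ l hl)
      (hc 2 h₂ ▸ h l hl 2 h₂) (hc 3 h₃ ▸ h l hl 3 h₃)
  exact ⟨a, b, hc, fun l hl ↦ (hcol l hl).1, fun l hl ↦ (hcol l hl).2⟩

lemma standardizedThreshold_eq_iff_exists_isAffineChange (hK : 3 ≤ K) (hθ : IsAdmissible K c γ)
    (hθ₀ : IsAdmissible K c₀ γ₀) :
    (∀ l ∈ Finset.Icc 1 K, ∀ k ∈ Finset.Icc 2 K,
      standardizedThreshold c δ γ l k = standardizedThreshold c₀ δ₀ γ₀ l k) ↔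
        ∃ a b, IsAffineChange K a b c δ γ c₀ δ₀ γ₀ := by
  refine ⟨exists_isAffineChange_of_standardizedThreshold_eq hK (fun l hl ↦ (hθ.scale_pos l hl).ne')
    (fun l hl ↦ (hθ₀.scale_pos l hl).ne') ?_, ?_⟩
  · exact (hθ₀.strictMonoOn ⟨le_rfl, by lia⟩ ⟨by lia, hK⟩ (by norm_num)).ne
  · rintro ⟨a, b, h⟩ l hl k hk
    have ha : a ≠ 0 := left_ne_zero_of_mul (h.scale_eq l hl ▸ (hθ.scale_pos l hl).ne')
    exact h.standardizedThreshold_eq ha hl hk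

lemma IsAdmissible.strictMonoOn_standardizedThreshold (hθ : IsAdmissible K c γ) (δ : ℕ → ℝ) {l : ℕ}
    (hl : l ∈ Finset.Icc 1 K) : StrictMonoOn (standardizedThreshold c δ γ l) (Set.Icc 2 K) :=
  fun _ hj _ hk hjk ↦
    div_lt_div_of_pos_right (sub_lt_sub_right (hθ.strictMonoOn hj hk hjk) _) (hθ.scale_pos l hl)

end Identification

section LinkFunction

variable {F : ℝ → ℝ} {K : ℕ} {w c₀ δ₀ γ₀ c δ γ : ℕ → ℝ}

/-- The transition probability from state `l` to state `k` of the ordered response model with link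
function `F` in place of `Φ`; the state of departure `l` comes first, so that columns of the
transition matrix are partial applications. -/
noncomputable def linkProb (F : ℝ → ℝ) (K : ℕ) (c δ γ : ℕ → ℝ) (l k : ℕ) : ℝ :=
  categoryProb K (F ∘ standardizedThreshold c δ γ l) k

/-- The limiting composite log-likelihood `L(θ)` of the model with link function `F` in place
of `Φ`, at the parameter `θ = (c, δ, γ)` when the truth is `θ₀ = (c₀, δ₀, γ₀)`. -/
noncomputable def linkLogLik (F : ℝ → ℝ) (K : ℕ) (w c₀ δ₀ γ₀ c δ γ : ℕ → ℝ) : ℝ :=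
  ∑ l ∈ Finset.Icc 1 K,
    w l * expectedLogLik (Finset.Icc 1 K) (linkProb F K c₀ δ₀ γ₀ l) (linkProb F K c δ γ l)

lemma mem_Ioo_of_strictMono_of_mem_Icc {α β : Type*} [Preorder α] [NoMinOrder α] [NoMaxOrder α]
    [Preorder β] {f : α → β} {a b : β} (hf : StrictMono f) (hf' : ∀ x, f x ∈ Set.Icc a b) (x : α) :
    f x ∈ Set.Ioo a b := by
  obtain ⟨y, hy⟩ := exists_lt x
  obtain ⟨z, hz⟩ := exists_gt x
  exact ⟨(hf' y).1.trans_lt (hf hy), (hf hz).trans_le (hf' z).2⟩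

lemma linkProb_pos (hF : StrictMono F) (hF' : ∀ x, F x ∈ Set.Icc 0 1) (hθ : IsAdmissible K c γ)
    (δ : ℕ → ℝ) : ∀ l ∈ Finset.Icc 1 K, ∀ k ∈ Finset.Icc 1 K, 0 < linkProb F K c δ γ l k :=
  fun _ hl _ hk ↦ categoryProb_pos
    (hF.comp_strictMonoOn (hθ.strictMonoOn_standardizedThreshold δ hl))
    (fun _ _ ↦ mem_Ioo_of_strictMono_of_mem_Icc hF hF' _) hk

lemma linkProb_eq_iff (hF : Function.Injective F) {l : ℕ} :
    (∀ k ∈ Finset.Icc 1 K, linkProb F K c δ γ l k = linkProb F K c₀ δ₀ γ₀ l k) ↔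
      ∀ k ∈ Finset.Icc 2 K,
        standardizedThreshold c δ γ l k = standardizedThreshold c₀ δ₀ γ₀ l k :=
  categoryProb_eq_iff.trans <| forall₂_congr fun _ _ ↦ hF.eq_iff

theorem cl1_pseudo_true_value_general (hF : StrictMono F) (hF' : ∀ x, F x ∈ Set.Icc 0 1)
    (hK : 3 ≤ K) (hw : ∀ l ∈ Finset.Icc 1 K, 0 < w l) (hθ₀ : IsAdmissible K c₀ γ₀)
    (hθ : IsAdmissible K c γ) :
    linkLogLik F K w c₀ δ₀ γ₀ c δ γ ≤ linkLogLik F K w c₀ δ₀ γ₀ c₀ δ₀ γ₀ ∧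
      (linkLogLik F K w c₀ δ₀ γ₀ c δ γ = linkLogLik F K w c₀ δ₀ γ₀ c₀ δ₀ γ₀ ↔
        ∃ a b, IsAffineChange K a b c δ γ c₀ δ₀ γ₀) := by
  have hp := linkProb_pos hF hF' hθ₀ δ₀
  have hq := linkProb_pos hF hF' hθ δ
  have hsum : ∀ l ∈ Finset.Icc 1 K, ∑ k ∈ Finset.Icc 1 K, linkProb F K c₀ δ₀ γ₀ l k =
      ∑ k ∈ Finset.Icc 1 K, linkProb F K c δ γ l k := fun l _ ↦
    (sum_categoryProb (by lia) _).trans (sum_categoryProb (by lia) _).symm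
  obtain ⟨hle, heq⟩ :=
    weighted_expectedLogLik_le_and_eq_iff hw (fun l hl k hk ↦ (hp l hl k hk).le) hq hsum
  exact ⟨hle, heq.trans <| (forall₂_congr fun _ _ ↦ linkProb_eq_iff hF.injective).trans <|
    standardizedThreshold_eq_iff_exists_isAffineChange hK hθ hθ₀⟩

end LinkFunction

lemma strictMono_cdf (μ : Measure ℝ) [IsProbabilityMeasure μ] [μ.IsOpenPosMeasure] :
    StrictMono (cdf μ) := by
  intro x y hxy
  have hIoo : 0 < μ (Set.Ioo x y) := (Measure.measure_Ioo_pos μ).2 hxy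
  have hIoc : 0 < μ.real (Set.Ioc x y) := ENNReal.toReal_pos
    (hIoo.trans_le (measure_mono Set.Ioo_subset_Ioc_self)).ne' (measure_ne_top μ _)
  rw [cdf_eq_real, cdf_eq_real, ← Set.Iic_union_Ioc_eq_Iic hxy.le,
    measureReal_union (Set.Iic_disjoint_Ioc le_rfl) measurableSet_Ioc]
  exact lt_add_of_pos_right _ hIoc

lemma stdNormalCDF_eq_cdf : stdNormalCDF = cdf (gaussianReal 0 1) :=
  funext fun x ↦ (cdf_eq_real _ x).symm

lemma strictMono_stdNormalCDF : StrictMono stdNormalCDF := by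
  have : (gaussianReal 0 1).IsOpenPosMeasure :=
    (gaussianReal_absolutelyContinuous' 0 one_ne_zero).isOpenPosMeasure
  exact stdNormalCDF_eq_cdf ▸ strictMono_cdf _

lemma stdNormalCDF_mem_Icc (x : ℝ) : stdNormalCDF x ∈ Set.Icc 0 1 :=
  stdNormalCDF_eq_cdf ▸ ⟨cdf_nonneg _ x, cdf_le_one _ x⟩

lemma cl1Valid.isAdmissible {K : ℕ} {c δ γ : ℕ → ℝ} (h : cl1Valid K c δ γ) :
    IsAdmissible K c γ where
  strictMonoOn := strictMonoOn_of_lt_add_one Set.ordConnected_Icc fun k _ hk hk' ↦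
    h.2.1 k hk.1 hk'.2
  scale_pos l hl := h.1 l (Finset.mem_Icc.1 hl).1 (Finset.mem_Icc.1 hl).2

lemma cl1L_eq_linkLogLik (K : ℕ) (w c₀ δ₀ γ₀ c δ γ : ℕ → ℝ) :
    cl1L K w c₀ δ₀ γ₀ c δ γ = linkLogLik stdNormalCDF K w c₀ δ₀ γ₀ c δ γ :=
  rfl

lemma IsAffineChange.eq_one_and_eq_zero {K : ℕ} (hK : 2 ≤ K) {a b : ℝ} {c δ γ c₀ δ₀ γ₀ : ℕ → ℝ}
    (h : IsAffineChange K a b c δ γ c₀ δ₀ γ₀) (hθ : cl1Valid K c δ γ)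
    (hθ₀ : cl1Valid K c₀ δ₀ γ₀) : a = 1 ∧ b = 0 := by
  obtain ⟨-, -, hc, hγ⟩ := hθ
  obtain ⟨-, -, hc₀, hγ₀⟩ := hθ₀
  have hscale := h.scale_eq 1 (Finset.mem_Icc.2 (by lia))
  have hthreshold := h.threshold_eq 2 (Finset.mem_Icc.2 (by lia))
  rw [hγ, hγ₀, mul_one] at hscale
  rw [hc, hc₀, mul_zero, zero_add] at hthreshold
  exact ⟨hscale.symm, hthreshold.symm⟩

/-- The true parameter `θ₀` is the unique maximizer over the
normalized parameter set `Θ*` of the limiting CL(1) composite log-likelihood. -/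
theorem cl1_pseudo_true_value
    (K : ℕ) (hK : 3 ≤ K)
    (w : ℕ → ℝ) (hw : ∀ l, 1 ≤ l → l ≤ K → 0 < w l)
    (c₀ δ₀ γ₀ : ℕ → ℝ) (hθ₀ : cl1Valid K c₀ δ₀ γ₀)
    (c δ γ : ℕ → ℝ) (hθ : cl1Valid K c δ γ) :
    cl1L K w c₀ δ₀ γ₀ c δ γ ≤ cl1L K w c₀ δ₀ γ₀ c₀ δ₀ γ₀ ∧
      (cl1L K w c₀ δ₀ γ₀ c δ γ = cl1L K w c₀ δ₀ γ₀ c₀ δ₀ γ₀ →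
        (∀ k, 2 ≤ k → k ≤ K → c k = c₀ k) ∧
          (∀ l, 1 ≤ l → l ≤ K → δ l = δ₀ l) ∧
          (∀ l, 1 ≤ l → l ≤ K → γ l = γ₀ l)) := by
  simp only [cl1L_eq_linkLogLik]
  obtain ⟨hle, heq⟩ := cl1_pseudo_true_value_general (δ₀ := δ₀) (δ := δ) strictMono_stdNormalCDF
    stdNormalCDF_mem_Icc hK (fun l hl ↦ hw l (Finset.mem_Icc.1 hl).1 (Finset.mem_Icc.1 hl).2)
    hθ₀.isAdmissible hθ.isAdmissible
  refine ⟨hle, fun h ↦ ?_⟩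
  obtain ⟨a, b, hab⟩ := heq.1 h
  obtain ⟨rfl, rfl⟩ := hab.eq_one_and_eq_zero (by lia) hθ hθ₀
  refine ⟨fun k hk hkK ↦ ?_, fun l hl hlK ↦ ?_, fun l hl hlK ↦ ?_⟩
  · simpa using hab.threshold_eq k (Finset.mem_Icc.2 ⟨hk, hkK⟩)
  · simpa using hab.location_eq l (Finset.mem_Icc.2 ⟨hl, hlK⟩)
  · simpa using hab.scale_eq l (Finset.mem_Icc.2 ⟨hl, hlK⟩)
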